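/- Let σ ∈ (0,2) and α ∈ (0,1). For every ε > 0 there is a constant C(ε) < ∞ (depending also on n, σ, α) such that for every u ∈ L^∞(ℝ^n) with ‖u‖*_{C^{σ+α}(B_1)} < ∞ one has |u|*_{σ,B_1} ≤ ε ‖u‖*_{C^{σ+α}(B_1)} + C(ε) ‖u‖_{L^∞(ℝ^n)}. -/

import Mathlib

open MeasureTheory Metric Set Function
noncomputable section

abbrev Rn (n : ℕ) : Type := EuclideanSpace ℝ (Fin n)
abbrev Mat (n : ℕ) : Type := Matrix (Fin n) (Fin n) ℝ

attribute [local instance] Matrix.normedAddCommGroup Matrix.normedSpace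

def deltaOp {n : ℕ} (u : Rn n → ℝ) (x y : Rn n) : ℝ := u (x + y) + u (x - y) - 2 * u x

def HasFiniteSigma {n : ℕ} (σ : ℝ) (u : Rn n → ℝ) (x : Rn n) : Prop :=
  Integrable (fun y : Rn n => |deltaOp u x y| * (2 - σ) / ‖y‖ ^ ((n : ℝ) + σ))

def Dsig {n : ℕ} (σ : ℝ) (ρ : Rn n → Rn n → ℝ) (u : Rn n → ℝ) (x : Rn n) : Mat n :=
  Matrix.of fun i j => ∫ y : Rn n,
    deltaOp u x y * ((2 - σ) * y i * y j * ρ x y) / ‖y‖ ^ ((n : ℝ) + σ + 2)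

structure IsWeight {n : ℕ} (ρ : Rn n → Rn n → ℝ) (lρ Lρ : ℝ) : Prop where
  pos : 0 < lρ
  le : lρ ≤ Lρ
  smooth : ContDiff ℝ (⊤ : ℕ∞) (uncurry ρ)
  lower : ∀ x y, lρ ≤ ρ x y
  upper : ∀ x y, ρ x y ≤ Lρ

structure IsNiceWeight {n : ℕ} (ρ : Rn n → Rn n → ℝ) (lρ Lρ : ℝ) (M : ℕ → ℝ)
    extends IsWeight ρ lρ Lρ : Prop where
  decay : ∀ (k : ℕ) (x y : Rn n), ‖iteratedFDeriv ℝ k (fun z => ρ x z) y‖ * ‖y‖ ^ k ≤ M k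

def UniformlyElliptic {n : ℕ} (F : Mat n → Rn n → ℝ) (lam Lam : ℝ) : Prop :=
  ∀ (M : Mat n), M.IsSymm → ∀ x ∈ ball (0 : Rn n) 1, ∀ (N : Mat n), N.PosSemidef →
    lam * ‖N‖ ≤ F (M + N) x - F M x ∧ F (M + N) x - F M x ≤ Lam * ‖N‖

def ConcaveInMatrix {n : ℕ} (F : Mat n → Rn n → ℝ) : Prop :=
  ∀ x ∈ ball (0 : Rn n) 1, ConcaveOn ℝ {M : Mat n | M.IsSymm} (fun M => F M x)

structure IsClassicalSolution {n : ℕ} (σ : ℝ) (ρ : Rn n → Rn n → ℝ) (F : Mat n → Rn n → ℝ)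
    (f g u : Rn n → ℝ) : Prop where
  bdd : ∃ K, ∀ x, |u x| ≤ K
  boundary : ∀ x, x ∉ ball (0 : Rn n) 1 → u x = g x
  finite : ∀ x ∈ ball (0 : Rn n) 1, HasFiniteSigma σ u x
  eqn : ∀ x ∈ ball (0 : Rn n) 1, F (Dsig σ ρ u x) x = f x

def CHolder {E G : Type*} [NormedAddCommGroup E] [NormedSpace ℝ E]
    [NormedAddCommGroup G] [NormedSpace ℝ G] (C s : ℝ) (u : E → G) (Ω : Set E) : Prop :=
  ContDiffOn ℝ (⌈s⌉₊ - 1 : ℕ) u Ω ∧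
  (∀ j ≤ ⌈s⌉₊ - 1, ∀ x ∈ Ω, ‖iteratedFDerivWithin ℝ j u Ω x‖ ≤ C) ∧
  ∀ x ∈ Ω, ∀ x' ∈ Ω,
    ‖iteratedFDerivWithin ℝ (⌈s⌉₊ - 1) u Ω x - iteratedFDerivWithin ℝ (⌈s⌉₊ - 1) u Ω x'‖ ≤
      C * ‖x - x'‖ ^ (s - (⌈s⌉₊ - 1 : ℕ))

/-- The scaled `σ`-seminorm `|u|*_{σ,B₁} = sup_{x∈B₁} d(x)^σ ∫ |δu(x,y)| (2-σ)/|y|^{n+σ} dy`,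
with `d(x) = 1 - ‖x‖` the distance to `∂B₁`. -/
def scaledSigmaSemi {n : ℕ} (σ : ℝ) (u : Rn n → ℝ) : ℝ :=
  ⨆ x : ↥(ball (0 : Rn n) 1), (1 - ‖(x : Rn n)‖) ^ σ *
    ∫ y : Rn n, |deltaOp u (x : Rn n) y| * (2 - σ) / ‖y‖ ^ ((n : ℝ) + σ)

def supNorm {n : ℕ} (u : Rn n → ℝ) : ℝ := ⨆ x : Rn n, |u x|

/-- `d(x)^j |D^j u(x)|` for `x ∈ B₁`. -/
def scaledDerivTerm {n : ℕ} (u : Rn n → ℝ) (j : ℕ) (x : ↥(ball (0 : Rn n) 1)) : ℝ :=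
  (1 - ‖(x : Rn n)‖) ^ j * ‖iteratedFDerivWithin ℝ j u (ball (0 : Rn n) 1) (x : Rn n)‖

/-- `min(d(x),d(x'))^s |D^k u(x) - D^k u(x')| / |x-x'|^γ` for `s = k + γ`, `γ ∈ (0,1]`. -/
def scaledHolderSemiTerm {n : ℕ} (s : ℝ) (u : Rn n → ℝ)
    (p : ↥(ball (0 : Rn n) 1) × ↥(ball (0 : Rn n) 1)) : ℝ :=
  min (1 - ‖(p.1 : Rn n)‖) (1 - ‖(p.2 : Rn n)‖) ^ s *
    ‖iteratedFDerivWithin ℝ (⌈s⌉₊ - 1) u (ball (0 : Rn n) 1) (p.1 : Rn n) -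
      iteratedFDerivWithin ℝ (⌈s⌉₊ - 1) u (ball (0 : Rn n) 1) (p.2 : Rn n)‖ /
    ‖(p.1 : Rn n) - (p.2 : Rn n)‖ ^ (s - (⌈s⌉₊ - 1 : ℕ))

/-- The interior scaled Hölder norm `‖u‖*_{C^s(B₁)}`. -/
def scaledHolderNorm {n : ℕ} (s : ℝ) (u : Rn n → ℝ) : ℝ :=
  (∑ j ∈ Finset.range (⌈s⌉₊ - 1 + 1), ⨆ x : ↥(ball (0 : Rn n) 1), scaledDerivTerm u j x) +
  ⨆ p : ↥(ball (0 : Rn n) 1) × ↥(ball (0 : Rn n) 1), scaledHolderSemiTerm s u p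

/-!
Write `d = 1 - ‖x‖`, `N` for the scaled Hölder norm of order `s > σ` and `M` for the sup norm. For
`|y| ≤ d / 2` the scaled Hölder norm controls the second difference, `|δu(x,y)| ≤ 8 N (|y| / d) ^ β`
with `β = min s 2 > σ`, while `|δu(x,y)| ≤ 4 M` everywhere. Splitting the integral at `|y| = r d`
and scaling, the near part contributes `O(r ^ (β - σ)) N` and the far part `O(r ^ (-σ)) M` to
`d ^ σ ∫ |δu(x,y)| (2 - σ) / |y| ^ (n + σ) dy`, uniformly in `x`. As `β > σ`, the coefficient of `N`
is at most `ε` once `r` is small.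
-/

section RadialPowers

open Module
open scoped Pointwise

variable {E F : Type*} [NormedAddCommGroup E] [NormedSpace ℝ E] [FiniteDimensional ℝ E]
  [MeasurableSpace E] [BorelSpace E] (μ : Measure E) [μ.IsAddHaarMeasure] [NormedAddCommGroup F]

theorem integrableOn_ball_norm_rpow {p R : ℝ} (hp : -(finrank ℝ E : ℝ) < p) (hR : 0 < R) :
    IntegrableOn (fun y : E => ‖y‖ ^ p) (ball 0 R) μ := by
  rcases subsingleton_or_nontrivial E with _ | _
  · exact Integrable.of_finite
  · rw [integrableOn_fun_norm_addHaar μ (f := fun t : ℝ => t ^ p)]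
    have hexp : -1 < ((finrank ℝ E - 1 : ℕ) : ℝ) + p := by
      rw [Nat.cast_pred finrank_pos]
      linarith
    refine ((intervalIntegral.integrableOn_Ioo_rpow_iff hR).2 hexp).congr_fun (fun t ht => ?_)
      measurableSet_Ioo
    simp only [Real.rpow_add ht.1, Real.rpow_natCast, smul_eq_mul]

theorem integrableOn_compl_ball_norm_rpow {p R : ℝ} (hp : p < -(finrank ℝ E : ℝ)) (hR : 0 < R) :
    IntegrableOn (fun y : E => ‖y‖ ^ p) (ball 0 R)ᶜ μ := by
  have hdom : Integrable (fun y : E => (R⁻¹ + 1) ^ (-p) * (1 + ‖y‖) ^ (- -p)) μ :=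
    (integrable_one_add_norm (lt_neg_of_lt_neg hp)).const_mul _
  refine hdom.integrableOn.mono' (measurable_norm.pow_const p).aestronglyMeasurable ?_
  filter_upwards [ae_restrict_mem measurableSet_ball.compl] with y hy
  have hRy : R ≤ ‖y‖ := by simpa using hy
  have hy0 : 0 < ‖y‖ := hR.trans_le hRy
  have hle : 1 + ‖y‖ ≤ (R⁻¹ + 1) * ‖y‖ := by
    have : 1 ≤ R⁻¹ * ‖y‖ := by rwa [inv_mul_eq_div, one_le_div₀ hR]
    linarith
  have hp0 : p ≤ 0 := by linarith [(finrank ℝ E).cast_nonneg (α := ℝ)]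
  rw [Real.norm_of_nonneg (by positivity), neg_neg, Real.rpow_neg (by positivity),
    ← div_eq_inv_mul, le_div_iff₀ (by positivity), mul_comm, ← Real.mul_rpow (by positivity) hy0.le]
  exact Real.rpow_le_rpow_of_nonpos (by positivity) hle hp0

theorem setIntegral_smul_norm_rpow (s : Set E) (p : ℝ) {R : ℝ} (hR : 0 < R) :
    ∫ y in R • s, ‖y‖ ^ p ∂μ = R ^ (finrank ℝ E + p) * ∫ y in s, ‖y‖ ^ p ∂μ := by
  have hscale := Measure.setIntegral_comp_smul_of_pos μ (fun y : E => ‖y‖ ^ p) s hR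
  simp only [norm_smul, Real.norm_of_nonneg hR.le, Real.mul_rpow hR.le (norm_nonneg _),
    integral_const_mul, smul_eq_mul] at hscale
  rw [Real.rpow_add hR, Real.rpow_natCast, mul_assoc, hscale, mul_inv_cancel_left₀ (by positivity)]

theorem setIntegral_ball_norm_rpow (p : ℝ) {R : ℝ} (hR : 0 < R) :
    ∫ y in ball (0 : E) R, ‖y‖ ^ p ∂μ =
      R ^ (finrank ℝ E + p) * ∫ y in ball (0 : E) 1, ‖y‖ ^ p ∂μ := by
  rw [← setIntegral_smul_norm_rpow μ _ p hR, smul_unitBall_of_pos hR]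

theorem setIntegral_compl_ball_norm_rpow (p : ℝ) {R : ℝ} (hR : 0 < R) :
    ∫ y in (ball (0 : E) R)ᶜ, ‖y‖ ^ p ∂μ =
      R ^ (finrank ℝ E + p) * ∫ y in (ball (0 : E) 1)ᶜ, ‖y‖ ^ p ∂μ := by
  have hcompl : R • (ball (0 : E) 1)ᶜ = (ball 0 R)ᶜ := by
    rw [← smul_unitBall_of_pos hR]
    exact Set.smul_set_compl (a := Units.mk0 R hR.ne')
  rw [← setIntegral_smul_norm_rpow μ _ p hR, hcompl]

theorem integral_norm_mul_norm_rpow_le {f : E → F} {σ β a b R : ℝ} (hσ : 0 < σ) (hσβ : σ < β)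
    (hR : 0 < R) (ha : 0 ≤ a) (hnear : ∀ y ∈ ball 0 R, ‖f y‖ ≤ a * ‖y‖ ^ β)
    (hfar : ∀ y ∉ ball 0 R, ‖f y‖ ≤ b) :
    ∫ y, ‖f y‖ * ‖y‖ ^ (-(finrank ℝ E + σ)) ∂μ ≤
      a * (R ^ (β - σ) * ∫ y in ball (0 : E) 1, ‖y‖ ^ (β - (finrank ℝ E + σ)) ∂μ) +
      b * (R ^ (-σ) * ∫ y in (ball (0 : E) 1)ᶜ, ‖y‖ ^ (-(finrank ℝ E + σ)) ∂μ) := by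
  classical
  have hnearInt := (integrableOn_ball_norm_rpow μ (p := β - (finrank ℝ E + σ)) (by linarith)
    hR).const_mul a
  have hfarInt := (integrableOn_compl_ball_norm_rpow μ (p := -(finrank ℝ E + σ)) (by linarith)
    hR).const_mul b
  have hpointwise : ∀ y, ‖f y‖ * ‖y‖ ^ (-(finrank ℝ E + σ)) ≤ (ball (0 : E) R).piecewise
      (fun y => a * ‖y‖ ^ (β - (finrank ℝ E + σ)))
      (fun y => b * ‖y‖ ^ (-(finrank ℝ E + σ))) y := by
    intro y
    by_cases hy : y ∈ ball 0 R
    · rw [piecewise_eq_of_mem _ _ _ hy]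
      rcases eq_or_ne y 0 with rfl | hy0
      · rw [norm_zero, Real.zero_rpow (neg_ne_zero.2 (by positivity)), mul_zero]
        positivity
      · rw [sub_eq_add_neg, Real.rpow_add (norm_pos_iff.2 hy0), ← mul_assoc]
        gcongr
        exact hnear y hy
    · rw [piecewise_eq_of_notMem _ _ _ hy]
      exact mul_le_mul_of_nonneg_right (hfar y hy) (by positivity)
  calc
    _ ≤ ∫ y, (ball (0 : E) R).piecewise (fun y => a * ‖y‖ ^ (β - (finrank ℝ E + σ)))
          (fun y => b * ‖y‖ ^ (-(finrank ℝ E + σ))) y ∂μ :=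
      integral_mono_of_nonneg (.of_forall fun y => by positivity)
        (Integrable.piecewise measurableSet_ball hnearInt hfarInt) (.of_forall hpointwise)
    _ = _ := by
      rw [integral_piecewise measurableSet_ball hnearInt hfarInt, integral_const_mul,
        integral_const_mul, setIntegral_ball_norm_rpow μ _ hR,
        setIntegral_compl_ball_norm_rpow μ _ hR]
      ring_nf

theorem rpow_mul_integral_norm_mul_norm_rpow_le {f : E → F} {σ β a b r d : ℝ} (hσ : 0 < σ)
    (hσβ : σ < β) (hr : 0 < r) (hd : 0 < d) (ha : 0 ≤ a)
    (hnear : ∀ y ∈ ball 0 (r * d), ‖f y‖ ≤ a * (‖y‖ / d) ^ β)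
    (hfar : ∀ y ∉ ball 0 (r * d), ‖f y‖ ≤ b) :
    d ^ σ * ∫ y, ‖f y‖ * ‖y‖ ^ (-(finrank ℝ E + σ)) ∂μ ≤
      a * (∫ y in ball (0 : E) 1, ‖y‖ ^ (β - (finrank ℝ E + σ)) ∂μ) * r ^ (β - σ) +
      b * (∫ y in (ball (0 : E) 1)ᶜ, ‖y‖ ^ (-(finrank ℝ E + σ)) ∂μ) * r ^ (-σ) := by
  have hnear' : ∀ y ∈ ball 0 (r * d), ‖f y‖ ≤ a / d ^ β * ‖y‖ ^ β := fun y hy =>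
    (hnear y hy).trans_eq (by rw [Real.div_rpow (norm_nonneg y) hd.le]; ring)
  refine (mul_le_mul_of_nonneg_left (integral_norm_mul_norm_rpow_le μ hσ hσβ (mul_pos hr hd)
    (by positivity) hnear' hfar) (by positivity)).trans_eq ?_
  rw [Real.mul_rpow hr.le hd.le, Real.mul_rpow hr.le hd.le, Real.rpow_sub hd, Real.rpow_neg hd.le]
  field_simp

end RadialPowers

section SecondDifference

variable {E F : Type*} [NormedAddCommGroup E] [NormedAddCommGroup F] [NormedSpace ℝ F]
  {f : E → F} {x y p : E} {H γ r : ℝ}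

theorem closedBall_norm_subset_closedBall_zero (hy : ‖y‖ ≤ (1 - ‖x‖) / 2) :
    closedBall x ‖y‖ ⊆ closedBall 0 (1 - (1 - ‖x‖) / 2) :=
  closedBall_subset_closedBall' (by rw [dist_zero_right]; linarith)

theorem norm_second_difference_le_of_holder
    (hf : ∀ p ∈ closedBall x ‖y‖, ‖f p - f x‖ ≤ H * ‖p - x‖ ^ γ) :
    ‖f (x + y) + f (x - y) - (2 : ℝ) • f x‖ ≤ 2 * (H * ‖y‖ ^ γ) := by
  have hplus := hf (x + y) (by simp)
  have hminus := hf (x - y) (by simp)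
  rw [add_sub_cancel_left] at hplus
  rw [sub_sub_cancel_left, norm_neg] at hminus
  calc ‖f (x + y) + f (x - y) - (2 : ℝ) • f x‖ = ‖f (x + y) - f x + (f (x - y) - f x)‖ := by
        congr 1; module
    _ ≤ 2 * (H * ‖y‖ ^ γ) := by linarith [norm_add_le_of_le hplus hminus]

variable [NormedSpace ℝ E]

theorem differentiableAt_of_mem_closedBall (hf : ContDiffOn ℝ 1 f (ball 0 1)) (hr : 0 < r)
    (hp : p ∈ closedBall 0 (1 - r)) : DifferentiableAt ℝ f p :=
  (hf.differentiableOn one_ne_zero).differentiableAt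
    (isOpen_ball.mem_nhds (closedBall_subset_ball (by linarith) hp))

theorem norm_fderiv_sub_fderiv_le (f : E → F) (p q : E) :
    ‖fderiv ℝ f p - fderiv ℝ f q‖ ≤ ‖iteratedFDeriv ℝ 1 f p - iteratedFDeriv ℝ 1 f q‖ :=
  ContinuousLinearMap.opNorm_le_bound _ (norm_nonneg _) fun v => by
    simpa [iteratedFDeriv_one_apply] using
      (iteratedFDeriv ℝ 1 f p - iteratedFDeriv ℝ 1 f q).le_opNorm fun _ => v

theorem norm_second_difference_le_of_norm_fderiv_sub_le
    (hf : ∀ z ∈ closedBall x ‖y‖, DifferentiableAt ℝ f z)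
    (hH : ∀ p ∈ closedBall x ‖y‖, ∀ q ∈ closedBall x ‖y‖, ‖p - q‖ ≤ 2 * ‖y‖ →
      ‖fderiv ℝ f p - fderiv ℝ f q‖ ≤ H) :
    ‖f (x + y) + f (x - y) - (2 : ℝ) • f x‖ ≤ H * ‖y‖ := by
  have hty : ∀ t ∈ Icc (0 : ℝ) 1, ‖t • y‖ ≤ ‖y‖ := fun t ht => by
    rw [norm_smul, Real.norm_of_nonneg ht.1]
    exact mul_le_of_le_one_left (norm_nonneg y) ht.2
  have hadd : ∀ t ∈ Icc (0 : ℝ) 1, x + t • y ∈ closedBall x ‖y‖ := fun t ht => by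
    simpa [mem_closedBall_iff_norm] using hty t ht
  have hsub : ∀ t ∈ Icc (0 : ℝ) 1, x - t • y ∈ closedBall x ‖y‖ := fun t ht => by
    simpa [mem_closedBall_iff_norm] using hty t ht
  have hderiv : ∀ t ∈ Icc (0 : ℝ) 1, HasDerivWithinAt (fun t : ℝ => f (x + t • y) + f (x - t • y))
      ((fderiv ℝ f (x + t • y) - fderiv ℝ f (x - t • y)) y) (Icc 0 1) t := fun t ht => by
    have hline : HasDerivAt (fun t : ℝ => t • y) y t := by
      simpa using (hasDerivAt_id t).smul_const y
    have hplus := (hf _ (hadd t ht)).hasFDerivAt.comp_hasDerivAt t (hline.const_add x)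
    have hminus := (hf _ (hsub t ht)).hasFDerivAt.comp_hasDerivAt t (hline.const_sub x)
    simpa [sub_eq_add_neg, Function.comp_def, Pi.add_def] using
      (hplus.add hminus).hasDerivWithinAt (s := Icc 0 1)
  have hbound : ∀ t ∈ Ico (0 : ℝ) 1,
      ‖(fderiv ℝ f (x + t • y) - fderiv ℝ f (x - t • y)) y‖ ≤ H * ‖y‖ := fun t ht => by
    have ht' := Ico_subset_Icc_self ht
    refine ContinuousLinearMap.le_of_opNorm_le _ (hH _ (hadd t ht') _ (hsub t ht') ?_) y
    calc ‖x + t • y - (x - t • y)‖ = ‖(2 : ℝ) • t • y‖ := by congr 1; module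
      _ ≤ 2 * ‖y‖ := by rw [norm_smul, Real.norm_two]; gcongr; exact hty t ht'
  have hmvt := norm_image_sub_le_of_norm_deriv_le_segment_01' hderiv hbound
  simpa [two_smul] using hmvt

theorem norm_second_difference_le_of_holder_fderiv (hγ : 0 ≤ γ) (hH : 0 ≤ H)
    (hf : ∀ z ∈ closedBall x ‖y‖, DifferentiableAt ℝ f z)
    (hf' : ∀ p ∈ closedBall x ‖y‖, ∀ q ∈ closedBall x ‖y‖,
      ‖fderiv ℝ f p - fderiv ℝ f q‖ ≤ H * ‖p - q‖ ^ γ) :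
    ‖f (x + y) + f (x - y) - (2 : ℝ) • f x‖ ≤ H * (2 * ‖y‖) ^ γ * ‖y‖ :=
  norm_second_difference_le_of_norm_fderiv_sub_le hf fun p hp q hq hpq =>
    (hf' p hp q hq).trans (by gcongr)

end SecondDifference

section ScaledHolder

variable {n : ℕ} {u : Rn n → ℝ} {s r : ℝ} {x y p q : Rn n}

theorem one_sub_norm_pos (x : ball (0 : Rn n) 1) : 0 < 1 - ‖(x : Rn n)‖ :=
  sub_pos.2 (mem_ball_zero_iff.1 x.2)

theorem scaledDerivTerm_nonneg (u : Rn n → ℝ) (j : ℕ) (x : ball (0 : Rn n) 1) :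
    0 ≤ scaledDerivTerm u j x :=
  mul_nonneg (pow_nonneg (one_sub_norm_pos x).le j) (norm_nonneg _)

theorem scaledHolderSemiTerm_nonneg (s : ℝ) (u : Rn n → ℝ)
    (p : ball (0 : Rn n) 1 × ball (0 : Rn n) 1) : 0 ≤ scaledHolderSemiTerm s u p := by
  have hmin := lt_min (one_sub_norm_pos p.1) (one_sub_norm_pos p.2)
  unfold scaledHolderSemiTerm
  positivity

theorem scaledHolderNorm_nonneg (s : ℝ) (u : Rn n → ℝ) : 0 ≤ scaledHolderNorm s u :=
  add_nonneg (Finset.sum_nonneg fun j _ => Real.iSup_nonneg (scaledDerivTerm_nonneg u j))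
    (Real.iSup_nonneg (scaledHolderSemiTerm_nonneg s u))

theorem scaledDerivTerm_le_scaledHolderNorm {j : ℕ} (hj : j ≤ ⌈s⌉₊ - 1)
    (hu : BddAbove (range (scaledDerivTerm u j))) (x : ball (0 : Rn n) 1) :
    scaledDerivTerm u j x ≤ scaledHolderNorm s u :=
  calc scaledDerivTerm u j x ≤ ⨆ x, scaledDerivTerm u j x := le_ciSup hu x
    _ ≤ ∑ j ∈ Finset.range (⌈s⌉₊ - 1 + 1), ⨆ x, scaledDerivTerm u j x :=
      Finset.single_le_sum (f := fun j => ⨆ x, scaledDerivTerm u j x)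
        (fun j _ => Real.iSup_nonneg (scaledDerivTerm_nonneg u j))
        (Finset.mem_range_succ_iff.2 hj)
    _ ≤ scaledHolderNorm s u :=
      le_add_of_nonneg_right (Real.iSup_nonneg (scaledHolderSemiTerm_nonneg s u))

theorem scaledHolderSemiTerm_le_scaledHolderNorm
    (hu : BddAbove (range (scaledHolderSemiTerm s u)))
    (p : ball (0 : Rn n) 1 × ball (0 : Rn n) 1) :
    scaledHolderSemiTerm s u p ≤ scaledHolderNorm s u :=
  (le_ciSup hu p).trans <| le_add_of_nonneg_left <|
    Finset.sum_nonneg fun j _ => Real.iSup_nonneg (scaledDerivTerm_nonneg u j)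

theorem norm_iteratedFDeriv_le_scaledHolderNorm {j : ℕ} (hj : j ≤ ⌈s⌉₊ - 1)
    (hu : BddAbove (range (scaledDerivTerm u j))) (hr : 0 < r) (hp : p ∈ closedBall 0 (1 - r)) :
    ‖iteratedFDeriv ℝ j u p‖ ≤ scaledHolderNorm s u / r ^ j := by
  have hpball : p ∈ ball (0 : Rn n) 1 := closedBall_subset_ball (by linarith) hp
  have hrp : r ≤ 1 - ‖p‖ := by linarith [mem_closedBall_zero_iff.1 hp]
  rw [← iteratedFDerivWithin_of_isOpen j isOpen_ball hpball, le_div_iff₀' (by positivity)]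
  exact (mul_le_mul_of_nonneg_right (pow_le_pow_left₀ hr.le hrp j) (norm_nonneg _)).trans
    (scaledDerivTerm_le_scaledHolderNorm hj hu ⟨p, hpball⟩)

theorem norm_iteratedFDeriv_sub_le_scaledHolderNorm (hs : 0 ≤ s)
    (hu : BddAbove (range (scaledHolderSemiTerm s u))) (hr : 0 < r)
    (hp : p ∈ closedBall 0 (1 - r)) (hq : q ∈ closedBall 0 (1 - r)) :
    ‖iteratedFDeriv ℝ (⌈s⌉₊ - 1) u p - iteratedFDeriv ℝ (⌈s⌉₊ - 1) u q‖ ≤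
      scaledHolderNorm s u / r ^ s * ‖p - q‖ ^ (s - (⌈s⌉₊ - 1 : ℕ)) := by
  rcases eq_or_ne p q with rfl | hpq
  · have := scaledHolderNorm_nonneg s u
    rw [sub_self, norm_zero]
    positivity
  have hsub : closedBall (0 : Rn n) (1 - r) ⊆ ball 0 1 := closedBall_subset_ball (by linarith)
  have hrmin : r ≤ min (1 - ‖p‖) (1 - ‖q‖) :=
    le_min (by linarith [mem_closedBall_zero_iff.1 hp]) (by linarith [mem_closedBall_zero_iff.1 hq])
  have hdist : 0 < ‖p - q‖ ^ (s - (⌈s⌉₊ - 1 : ℕ)) :=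
    Real.rpow_pos_of_pos (norm_sub_pos_iff.2 hpq) _
  have hterm := scaledHolderSemiTerm_le_scaledHolderNorm hu (⟨p, hsub hp⟩, ⟨q, hsub hq⟩)
  rw [scaledHolderSemiTerm, div_le_iff₀ hdist,
    iteratedFDerivWithin_of_isOpen _ isOpen_ball (hsub hp),
    iteratedFDerivWithin_of_isOpen _ isOpen_ball (hsub hq)] at hterm
  rw [div_mul_eq_mul_div, le_div_iff₀' (by positivity)]
  exact (mul_le_mul_of_nonneg_right (Real.rpow_le_rpow hr.le hrmin hs) (norm_nonneg _)).trans hterm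

theorem abs_deltaOp_le_of_le_one (hs0 : 0 < s) (hs1 : s ≤ 1)
    (hu : BddAbove (range (scaledHolderSemiTerm s u))) (hx : ‖x‖ < 1)
    (hy : ‖y‖ ≤ (1 - ‖x‖) / 2) :
    |deltaOp u x y| ≤ 8 * scaledHolderNorm s u * (‖y‖ / (1 - ‖x‖)) ^ s := by
  have hd : 0 < 1 - ‖x‖ := by linarith
  have hN := scaledHolderNorm_nonneg s u
  have hk : ⌈s⌉₊ - 1 = 0 := by have := Nat.ceil_le.2 (hs1.trans_eq Nat.cast_one.symm); omega
  have hsub := closedBall_norm_subset_closedBall_zero hy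
  have hholder : ∀ p ∈ closedBall x ‖y‖,
      ‖u p - u x‖ ≤ scaledHolderNorm s u / ((1 - ‖x‖) / 2) ^ s * ‖p - x‖ ^ s := fun p hp => by
    have := norm_iteratedFDeriv_sub_le_scaledHolderNorm hs0.le hu (half_pos hd) (hsub hp)
      (hsub (mem_closedBall_self (norm_nonneg y)))
    rw [hk] at this
    simpa only [Nat.cast_zero, sub_zero, iteratedFDeriv_zero_eq_comp, Function.comp_apply,
      ← map_sub, LinearIsometryEquiv.norm_map] using this
  calc |deltaOp u x y| ≤ 2 * (scaledHolderNorm s u / ((1 - ‖x‖) / 2) ^ s * ‖y‖ ^ s) :=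
        norm_second_difference_le_of_holder hholder
    _ = 2 * 2 ^ s * scaledHolderNorm s u * (‖y‖ / (1 - ‖x‖)) ^ s := by
        rw [Real.div_rpow hd.le zero_le_two, Real.div_rpow (norm_nonneg _) hd.le]
        field_simp
    _ ≤ 8 * scaledHolderNorm s u * (‖y‖ / (1 - ‖x‖)) ^ s := by
        have : (2 : ℝ) ^ s ≤ 2 ^ (1 : ℝ) := Real.rpow_le_rpow_of_exponent_le one_le_two hs1
        rw [Real.rpow_one] at this
        gcongr
        linarith

theorem abs_deltaOp_le_of_mem_Ioc (hs : s ∈ Ioc 1 2) (hdiff : ContDiffOn ℝ 1 u (ball 0 1))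
    (hu : BddAbove (range (scaledHolderSemiTerm s u))) (hx : ‖x‖ < 1)
    (hy : ‖y‖ ≤ (1 - ‖x‖) / 2) :
    |deltaOp u x y| ≤ 8 * scaledHolderNorm s u * (‖y‖ / (1 - ‖x‖)) ^ s := by
  have hs0 : 0 < s := one_pos.trans hs.1
  have hd : 0 < 1 - ‖x‖ := by linarith
  have hN := scaledHolderNorm_nonneg s u
  have hk : ⌈s⌉₊ - 1 = 1 := by
    rw [(Nat.ceil_eq_iff two_ne_zero).2 ⟨by simpa using hs.1, mod_cast hs.2⟩]
  have hsub := closedBall_norm_subset_closedBall_zero hy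
  have hholder : ∀ p ∈ closedBall x ‖y‖, ∀ q ∈ closedBall x ‖y‖, ‖fderiv ℝ u p - fderiv ℝ u q‖ ≤
      scaledHolderNorm s u / ((1 - ‖x‖) / 2) ^ s * ‖p - q‖ ^ (s - 1) := fun p hp q hq => by
    have := norm_iteratedFDeriv_sub_le_scaledHolderNorm hs0.le hu (half_pos hd) (hsub hp) (hsub hq)
    rw [hk, Nat.cast_one] at this
    exact (norm_fderiv_sub_fderiv_le u p q).trans this
  calc |deltaOp u x y| ≤
          scaledHolderNorm s u / ((1 - ‖x‖) / 2) ^ s * (2 * ‖y‖) ^ (s - 1) * ‖y‖ :=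
        norm_second_difference_le_of_holder_fderiv (by linarith [hs.1]) (by positivity)
          (fun p hp => differentiableAt_of_mem_closedBall hdiff (half_pos hd) (hsub hp)) hholder
    _ = 2 ^ (s - 1) * 2 ^ s * scaledHolderNorm s u * (‖y‖ / (1 - ‖x‖)) ^ s := by
        have hpow : ‖y‖ ^ s = ‖y‖ ^ (s - 1) * ‖y‖ := by
          rw [← Real.rpow_add_one' (norm_nonneg y) (by linarith), sub_add_cancel]
        rw [Real.div_rpow hd.le zero_le_two, Real.div_rpow (norm_nonneg _) hd.le,
          Real.mul_rpow zero_le_two (norm_nonneg _), hpow]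
        field_simp
    _ ≤ 8 * scaledHolderNorm s u * (‖y‖ / (1 - ‖x‖)) ^ s := by
        have : (2 : ℝ) ^ (s - 1) * 2 ^ s ≤ 8 := calc
          (2 : ℝ) ^ (s - 1) * 2 ^ s = 2 ^ (s - 1 + s) := (Real.rpow_add two_pos _ _).symm
          _ ≤ 2 ^ (3 : ℝ) := Real.rpow_le_rpow_of_exponent_le one_le_two (by linarith [hs.2])
          _ = 8 := by norm_num
        gcongr

theorem norm_fderiv_sub_le_scaledHolderNorm (hs : 2 < s) (hdiff : ContDiffOn ℝ 2 u (ball 0 1))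
    (hu : BddAbove (range (scaledDerivTerm u 2))) (hr : 0 < r) (hp : p ∈ closedBall 0 (1 - r))
    (hq : q ∈ closedBall 0 (1 - r)) :
    ‖fderiv ℝ u p - fderiv ℝ u q‖ ≤ scaledHolderNorm s u / r ^ 2 * ‖p - q‖ := by
  have hk : 2 ≤ ⌈s⌉₊ - 1 := Nat.le_sub_one_of_lt (Nat.lt_ceil.2 (by exact_mod_cast hs))
  have hfderiv : ContDiffOn ℝ 1 (fderiv ℝ u) (ball (0 : Rn n) 1) :=
    hdiff.fderiv_of_isOpen isOpen_ball (by norm_num)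
  refine (convex_closedBall (0 : Rn n) (1 - r)).norm_image_sub_le_of_norm_fderiv_le (𝕜 := ℝ)
    (fun z hz => differentiableAt_of_mem_closedBall hfderiv hr hz) (fun z hz => ?_) hq hp
  rw [← norm_iteratedFDeriv_one, norm_iteratedFDeriv_fderiv]
  exact norm_iteratedFDeriv_le_scaledHolderNorm hk hu hr hz

theorem abs_deltaOp_le_of_two_lt (hs : 2 < s) (hdiff : ContDiffOn ℝ 2 u (ball 0 1))
    (hu : BddAbove (range (scaledDerivTerm u 2))) (hx : ‖x‖ < 1) (hy : ‖y‖ ≤ (1 - ‖x‖) / 2) :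
    |deltaOp u x y| ≤ 8 * scaledHolderNorm s u * (‖y‖ / (1 - ‖x‖)) ^ (2 : ℝ) := by
  have hd : 0 < 1 - ‖x‖ := by linarith
  have hN := scaledHolderNorm_nonneg s u
  have hsub := closedBall_norm_subset_closedBall_zero hy
  calc |deltaOp u x y| ≤
          scaledHolderNorm s u / ((1 - ‖x‖) / 2) ^ 2 * (2 * ‖y‖) ^ (1 : ℝ) * ‖y‖ :=
        norm_second_difference_le_of_holder_fderiv zero_le_one (by positivity)
          (fun p hp => differentiableAt_of_mem_closedBall (hdiff.of_le one_le_two) (half_pos hd)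
            (hsub hp))
          (fun p hp q hq => by
            rw [Real.rpow_one]
            exact norm_fderiv_sub_le_scaledHolderNorm hs hdiff hu (half_pos hd) (hsub hp) (hsub hq))
    _ = 8 * scaledHolderNorm s u * (‖y‖ / (1 - ‖x‖)) ^ (2 : ℝ) := by
        rw [Real.rpow_one, Real.rpow_two]
        field_simp
        ring

theorem abs_deltaOp_le_scaledHolderNorm (hs : 0 < s)
    (hdiff : ContDiffOn ℝ (⌈s⌉₊ - 1 : ℕ) u (ball 0 1))
    (hderiv : ∀ j ≤ ⌈s⌉₊ - 1, BddAbove (range (scaledDerivTerm u j)))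
    (hholder : BddAbove (range (scaledHolderSemiTerm s u)))
    (hx : ‖x‖ < 1) (hy : ‖y‖ ≤ (1 - ‖x‖) / 2) :
    |deltaOp u x y| ≤ 8 * scaledHolderNorm s u * (‖y‖ / (1 - ‖x‖)) ^ min s 2 := by
  have hk {k : ℕ} (hks : k < s) : k ≤ ⌈s⌉₊ - 1 := Nat.le_sub_one_of_lt (Nat.lt_ceil.2 hks)
  rcases le_or_gt s 2 with hs2 | hs2
  · rw [min_eq_left hs2]
    rcases le_or_gt s 1 with hs1 | hs1
    · exact abs_deltaOp_le_of_le_one hs hs1 hholder hx hy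
    · have hk1 := hk (k := 1) (by exact_mod_cast hs1)
      exact abs_deltaOp_le_of_mem_Ioc ⟨hs1, hs2⟩ (hdiff.of_le (by exact_mod_cast hk1)) hholder hx hy
  · have hk2 := hk (k := 2) (by exact_mod_cast hs2)
    rw [min_eq_right hs2.le]
    exact abs_deltaOp_le_of_two_lt hs2 (hdiff.of_le (by exact_mod_cast hk2)) (hderiv 2 hk2) hx hy

end ScaledHolder

section Interpolation

variable {n : ℕ} {u : Rn n → ℝ} {σ s r : ℝ}

theorem abs_le_supNorm (hu : BddAbove (range fun x => |u x|)) (x : Rn n) : |u x| ≤ supNorm u :=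
  le_ciSup hu x

theorem supNorm_nonneg (u : Rn n → ℝ) : 0 ≤ supNorm u :=
  Real.iSup_nonneg fun x => abs_nonneg (u x)

theorem abs_deltaOp_le_supNorm (hu : BddAbove (range fun x => |u x|)) (x y : Rn n) :
    |deltaOp u x y| ≤ 4 * supNorm u := by
  have hplus := abs_le.1 (abs_le_supNorm hu (x + y))
  have hminus := abs_le.1 (abs_le_supNorm hu (x - y))
  have hcenter := abs_le.1 (abs_le_supNorm hu x)
  rw [deltaOp, abs_le]
  constructor <;> linarith

theorem scaledSigmaSemi_le (hσ0 : 0 < σ) (hσ2 : σ < 2) (hσs : σ < s) (hr : r ∈ Ioc 0 (1 / 2))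
    (hbdd : BddAbove (range fun x => |u x|))
    (hdiff : ContDiffOn ℝ (⌈s⌉₊ - 1 : ℕ) u (ball 0 1))
    (hderiv : ∀ j ≤ ⌈s⌉₊ - 1, BddAbove (range (scaledDerivTerm u j)))
    (hholder : BddAbove (range (scaledHolderSemiTerm s u))) :
    scaledSigmaSemi σ u ≤
      8 * (2 - σ) * (∫ z in ball (0 : Rn n) 1, ‖z‖ ^ (min s 2 - (n + σ))) * r ^ (min s 2 - σ) *
        scaledHolderNorm s u +
      4 * (2 - σ) * (∫ z in (ball (0 : Rn n) 1)ᶜ, ‖z‖ ^ (-(n + σ))) * r ^ (-σ) * supNorm u := by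
  have : Nonempty (ball (0 : Rn n) 1) := ⟨0, mem_ball_self one_pos⟩
  refine ciSup_le fun x => ?_
  set d := 1 - ‖(x : Rn n)‖
  have hd : 0 < d := one_sub_norm_pos x
  have hN := scaledHolderNorm_nonneg s u
  have hnear : ∀ y ∈ ball 0 (r * d),
      ‖deltaOp u x y‖ ≤ 8 * scaledHolderNorm s u * (‖y‖ / d) ^ min s 2 := fun y hy => by
    have hyd : ‖y‖ ≤ d / 2 := by
      linarith [mem_ball_zero_iff.1 hy, mul_le_mul_of_nonneg_right hr.2 hd.le]
    exact abs_deltaOp_le_scaledHolderNorm (hσ0.trans hσs) hdiff hderiv hholder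
      (mem_ball_zero_iff.1 x.2) hyd
  have hkernel : ∫ y, |deltaOp u x y| * (2 - σ) / ‖y‖ ^ (n + σ) =
      (2 - σ) * ∫ y, ‖deltaOp u x y‖ * ‖y‖ ^ (-(n + σ)) := by
    rw [← integral_const_mul]
    congr with y
    rw [Real.rpow_neg (norm_nonneg y), Real.norm_eq_abs]
    ring
  have hint := rpow_mul_integral_norm_mul_norm_rpow_le volume hσ0 (lt_min hσs hσ2) hr.1 hd
    (by positivity) hnear fun y _ => abs_deltaOp_le_supNorm hbdd x y
  rw [finrank_euclideanSpace_fin] at hint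
  rw [hkernel, mul_left_comm]
  linarith [mul_le_mul_of_nonneg_left hint (sub_pos.2 hσ2).le]

theorem exists_mem_Ioc_mul_rpow_le {p ε R : ℝ} (c : ℝ) (hp : 0 < p) (hε : 0 < ε) (hR : 0 < R) :
    ∃ r ∈ Ioc 0 R, c * r ^ p ≤ ε := by
  have hlim : Filter.Tendsto (fun r : ℝ => c * r ^ p) (nhdsWithin 0 (Ioi 0)) (nhds 0) := by
    have := (Real.continuousAt_rpow_const 0 p (.inr hp.le)).tendsto.const_mul c
    rw [Real.zero_rpow hp.ne', mul_zero] at this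
    exact this.mono_left nhdsWithin_le_nhds
  obtain ⟨r, hle, hr⟩ := ((hlim.eventually_le_const hε).and (Ioc_mem_nhdsGT hR)).exists
  exact ⟨r, hr, hle⟩

end Interpolation

theorem interpolation_scaled_seminorm_general (n : ℕ) {σ s ε : ℝ} (hσ0 : 0 < σ) (hσ2 : σ < 2)
    (hσs : σ < s) (hε : 0 < ε) :
    ∃ C : ℝ, 0 < C ∧
      ∀ u : Rn n → ℝ,
        BddAbove (range fun x : Rn n => |u x|) →
        ContDiffOn ℝ (⌈s⌉₊ - 1 : ℕ) u (ball (0 : Rn n) 1) →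
        (∀ j ≤ ⌈s⌉₊ - 1, BddAbove (range (scaledDerivTerm u j))) →
        BddAbove (range (scaledHolderSemiTerm s u)) →
        scaledSigmaSemi σ u ≤ ε * scaledHolderNorm s u + C * supNorm u := by
  obtain ⟨r, hr, hrε⟩ := exists_mem_Ioc_mul_rpow_le
    (8 * (2 - σ) * ∫ z in ball (0 : Rn n) 1, ‖z‖ ^ (min s 2 - (n + σ)))
    (sub_pos.2 (lt_min hσs hσ2)) hε one_half_pos
  have hfar : 0 ≤ ∫ z in (ball (0 : Rn n) 1)ᶜ, ‖z‖ ^ (-(n + σ)) :=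
    integral_nonneg fun z => by positivity
  refine ⟨4 * (2 - σ) * (∫ z in (ball (0 : Rn n) 1)ᶜ, ‖z‖ ^ (-(n + σ))) * r ^ (-σ) + 1,
    add_pos_of_nonneg_of_pos
      (mul_nonneg (mul_nonneg (by linarith) hfar) (Real.rpow_nonneg hr.1.le _)) one_pos,
    fun u hbdd hdiff hderiv hholder => ?_⟩
  have hN := scaledHolderNorm_nonneg s u
  have hM := supNorm_nonneg u
  refine (scaledSigmaSemi_le hσ0 hσ2 hσs hr hbdd hdiff hderiv hholder).trans ?_
  gcongr
  exact le_add_of_nonneg_right zero_le_one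

/-- interpolation inequality
`|u|*_{σ,B₁} ≤ ε ‖u‖*_{C^{σ+α}(B₁)} + C(ε) ‖u‖_{L^∞(ℝⁿ)}`. -/
theorem interpolation_scaled_seminorm
    (n : ℕ) (hn : 1 ≤ n) (σ α : ℝ) (hσ0 : 0 < σ) (hσ2 : σ < 2) (hα0 : 0 < α) (hα1 : α < 1)
    (ε : ℝ) (hε : 0 < ε) :
    ∃ C : ℝ, 0 < C ∧
      ∀ u : Rn n → ℝ,
        BddAbove (Set.range fun x : Rn n => |u x|) →
        ContDiffOn ℝ (⌈σ + α⌉₊ - 1 : ℕ) u (ball (0 : Rn n) 1) →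
        (∀ j ≤ ⌈σ + α⌉₊ - 1, BddAbove (Set.range (scaledDerivTerm u j))) →
        BddAbove (Set.range (scaledHolderSemiTerm (σ + α) u)) →
        scaledSigmaSemi σ u ≤ ε * scaledHolderNorm (σ + α) u + C * supNorm u :=
  interpolation_scaled_seminorm_general n hσ0 hσ2 (lt_add_of_pos_right σ hα0) hε
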